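/- The group GL_n(Z) is finitely presented and contains only finitely many finite subgroups up to conjugacy. -/

import Mathlib

open Matrix

/-- A Čech 1-cocycle with values in a discrete group on a simply connected space is trivial. -/
theorem cocycle_trivial {X : Type} [TopologicalSpace X] [SimplyConnectedSpace X]
    [LocallyPathConnectedSpace X] {ι : Type} (W : ι → Set X) (hopen : ∀ i, IsOpen (W i))
    (hcov : ∀ x, ∃ i, x ∈ W i) (hconn : ∀ i, IsPreconnected (W i))
    {Γ : Type} [Group Γ] (a : ι → ι → Γ) (h1 : ∀ i, (W i).Nonempty → a i i = 1)
    (h2 : ∀ i j k x, x ∈ W i → x ∈ W j → x ∈ W k → a i j * a j k = a i k) :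
    ∃ c : ι → Γ, ∀ i j, (W i ∩ W j).Nonempty → c j = c i * a i j := by
  classical
  let _ : TopologicalSpace Γ := ⊥
  have : DiscreteTopology Γ := ⟨rfl⟩
  choose idx hidx using hcov
  let Z : FiberBundleCore ι X Γ :=
    { baseSet := W
      isOpen_baseSet := hopen
      indexAt := idx
      mem_baseSet_at := hidx
      coordChange := fun i j _ v => v * a i j
      coordChange_self := fun i x hx v => by simp [h1 i ⟨x, hx⟩]
      continuousOn_coordChange := fun i j => by
        have : Continuous (fun v : Γ => v * a i j) := continuous_of_discreteTopology
        exact (this.comp continuous_snd).continuousOn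
      coordChange_comp := fun i j k x hx v => by
        rw [mul_assoc, h2 i j k x hx.1.1 hx.1.2 hx.2] }
  have hcovm : IsCoveringMap (Bundle.TotalSpace.proj : Bundle.TotalSpace Γ Z.Fiber → X) :=
    FiberBundle.isCoveringMap
  let x0 : X := Classical.arbitrary X
  obtain ⟨s, ⟨-, hs⟩, -⟩ := hcovm.existsUnique_continuousMap_lifts (ContinuousMap.id X) x0
    (⟨x0, (1 : Γ)⟩ : Bundle.TotalSpace Γ Z.Fiber) rfl
  have hs' : ∀ x, (s x).proj = x := fun x => congrFun hs x
  let f : ι → X → Γ := fun i x => (Z.localTriv i (s x)).2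
  have hf : ∀ i, ContinuousOn (f i) (W i) := by
    intro i
    refine continuous_snd.comp_continuousOn ?_
    refine (Z.localTriv i).continuousOn.comp s.continuous.continuousOn ?_
    intro x hx
    rw [(Z.localTriv i).mem_source]
    change (s x).proj ∈ W i
    rwa [hs']
  have hff : ∀ i j x, x ∈ W i → x ∈ W j → f j x = f i x * a i j := by
    intro i j x hi hj
    let v : Γ := (s x).2
    change v * a (idx (s x).1) j = v * a (idx (s x).1) i * a i j
    rw [mul_assoc, h2 _ i j x _ hi hj]
    have := hidx (s x).1
    rwa [hs' x] at this ⊢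
  let c : ι → Γ := fun i => if h : (W i).Nonempty then f i h.some else 1
  have hc : ∀ i x, x ∈ W i → f i x = c i := by
    intro i x hx
    have h : (W i).Nonempty := ⟨x, hx⟩
    simp only [c, dif_pos h]
    exact (hconn i).constant (hf i) hx h.some_mem
  refine ⟨c, fun i j ⟨x, hi, hj⟩ => ?_⟩
  rw [← hc i x hi, ← hc j x hj, hff i j x hi hj]

/-- The theorem of Macbeath. -/
theorem macbeath {X : Type} [TopologicalSpace X] [SimplyConnectedSpace X]
    [LocallyPathConnectedSpace X] {G : Type} [Group G] (W : G → Set X)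
    (hopen : ∀ i, IsOpen (W i))
    (hcov : ∀ x, ∃ i, x ∈ W i) (hconn : ∀ i, IsPreconnected (W i))
    (T : Set G) (hT : T.Finite) (hWT : ∀ i j, (W i ∩ W j).Nonempty ↔ i⁻¹ * j ∈ T) :
    Group.IsFinitelyPresented G := by
  classical
  have hne1 : ∃ i, (W i).Nonempty := by
    obtain ⟨i, hi⟩ := hcov (Classical.arbitrary X)
    exact ⟨i, _, hi⟩
  have h1T : (1 : G) ∈ T := by
    obtain ⟨i, x, hx⟩ := hne1
    have := (hWT i i).1 ⟨x, hx, hx⟩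
    simpa using this
  have hne : ∀ i, (W i).Nonempty := fun i => by
    obtain ⟨x, hx⟩ := (hWT i i).2 (by simpa using h1T)
    exact ⟨x, hx.1⟩
  have : Finite T := hT
  let R : Set (FreeGroup T) := Set.range (fun p : {p : T × T // (p.1 : G) * p.2 ∈ T} =>
    FreeGroup.of p.1.1 * FreeGroup.of p.1.2 * (FreeGroup.of (⟨_, p.2⟩ : T))⁻¹)
  have : Finite R := Set.finite_range _
  let π : PresentedGroup R →* G := PresentedGroup.toGroup (f := fun t : T => (t : G)) (by
    rintro _ ⟨p, rfl⟩
    simp)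
  have hπ : ∀ t : T, π (PresentedGroup.of t) = t := fun t => PresentedGroup.toGroup.of _
  have hrel : ∀ (s t : G) (hs : s ∈ T) (ht : t ∈ T) (hst : s * t ∈ T),
      (PresentedGroup.of (⟨s, hs⟩ : T) : PresentedGroup R) * PresentedGroup.of ⟨t, ht⟩
        = PresentedGroup.of ⟨s * t, hst⟩ := by
    intro s t hs ht hst
    have : PresentedGroup.mk R (FreeGroup.of (⟨s, hs⟩ : T) * FreeGroup.of (⟨t, ht⟩ : T)
      * (FreeGroup.of (⟨_, hst⟩ : T))⁻¹) = 1 :=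
      PresentedGroup.one_of_mem ⟨⟨(⟨s, hs⟩, ⟨t, ht⟩), hst⟩, rfl⟩
    rw [map_mul, map_mul, map_inv, mul_inv_eq_one] at this
    exact this
  let a : G → G → PresentedGroup R := fun i j =>
    if h : i⁻¹ * j ∈ T then PresentedGroup.of ⟨_, h⟩ else 1
  have ha : ∀ i j (h : i⁻¹ * j ∈ T), a i j = PresentedGroup.of ⟨_, h⟩ := fun i j h => dif_pos h
  have h2 : ∀ i j k x, x ∈ W i → x ∈ W j → x ∈ W k → a i j * a j k = a i k := by
    intro i j k x hi hj hk
    have hij := (hWT i j).1 ⟨x, hi, hj⟩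
    have hjk := (hWT j k).1 ⟨x, hj, hk⟩
    have hik := (hWT i k).1 ⟨x, hi, hk⟩
    have e : i⁻¹ * j * (j⁻¹ * k) = i⁻¹ * k := by group
    rw [ha _ _ hij, ha _ _ hjk, ha _ _ hik, hrel _ _ _ _ (by rw [e]; exact hik)]
    congr 1
    exact Subtype.ext e
  have h1 : ∀ i, (W i).Nonempty → a i i = 1 := by
    rintro i ⟨x, hx⟩
    have := h2 i i i x hx hx hx
    simpa using this
  obtain ⟨c, hc⟩ := cocycle_trivial W hopen hcov hconn a h1 h2
  have hc1 : ∀ (g : G) (t : T), c (g * t) = c g * PresentedGroup.of t := by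
    intro g t
    have ht : g⁻¹ * (g * t) ∈ T := by simp
    rw [hc g (g * t) ((hWT _ _).2 ht), ha _ _ ht]
    congr 2
    exact Subtype.ext (by simp)
  have hc2 : ∀ (w : PresentedGroup R) (g : G), c (g * π w) = c g * w := by
    intro w
    have hw : w ∈ Subgroup.closure (Set.range (PresentedGroup.of (rels := R))) := by
      rw [PresentedGroup.closure_range_of]; trivial
    induction hw using Subgroup.closure_induction with
    | mem x hx =>
      obtain ⟨t, rfl⟩ := hx
      intro g
      rw [hπ, hc1]
    | one => intro g; simp
    | mul x y _ _ hx hy => intro g; rw [map_mul, ← mul_assoc, hy, hx, mul_assoc]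
    | inv x _ hx =>
      intro g
      have := hx (g * π x⁻¹)
      rw [eq_mul_inv_iff_mul_eq, ← this]
      simp
  have hinj : Function.Injective π := by
    rw [injective_iff_map_eq_one]
    intro w hw
    have := hc2 w 1
    rw [hw] at this
    simpa using this
  have hsurj : Function.Surjective π := by
    choose idx hidx using hcov
    let H := π.range
    have key : ∀ i j x, x ∈ W i → x ∈ W j → (i : G ⧸ H) = (j : G ⧸ H) := by
      intro i j x hi hj
      rw [QuotientGroup.eq]
      exact ⟨PresentedGroup.of ⟨_, (hWT i j).1 ⟨x, hi, hj⟩⟩, hπ _⟩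
    have hlc : IsLocallyConstant (fun x => (idx x : G ⧸ H)) := by
      rw [IsLocallyConstant.iff_exists_open]
      intro x
      exact ⟨W (idx x), hopen _, hidx x, fun y hy => key _ _ y (hidx y) hy⟩
    intro g
    obtain ⟨x, hx⟩ := hne 1
    obtain ⟨y, hy⟩ := hne g
    have h3 := hlc.apply_eq_of_preconnectedSpace x y
    have h4 : ((1 : G) : G ⧸ H) = (g : G ⧸ H) :=
      (key _ _ x hx (hidx x)).trans (h3.trans (key _ _ y (hidx y) hy))
    rw [QuotientGroup.eq] at h4
    simpa [H] using h4
  exact Group.IsFinitelyPresented.equiv (MulEquiv.ofBijective π ⟨hinj, hsurj⟩)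

/-- A basis that is almost Minkowski reduced. -/
def IsGood {n : ℕ} {E : Type} [NormedAddCommGroup E] [InnerProductSpace ℝ E] (D : ℝ)
    (e : Fin n → E) : Prop :=
  (∀ i, ∀ x : Fin n → ℤ, (∃ j, i ≤ j ∧ x j ≠ 0) → ‖e i‖ < D * ‖∑ j, (x j : ℝ) • e j‖) ∧
  (∀ i j, j < i → |inner ℝ (e i) (e j)| < D ^ 2 * ‖e j‖ ^ 2)

/-- Simultaneous Dirichlet approximation. -/
theorem dirichlet_simul (n M : ℕ) (hM : 0 < M) (y : Fin n → ℝ) :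
    ∃ q : ℕ, 0 < q ∧ q ≤ M ^ n ∧ ∃ p : Fin n → ℤ, ∀ j, |q * y j - p j| < 1 / M := by
  have hM' : (0 : ℝ) < M := by exact_mod_cast hM
  have hbound : ∀ (q : ℕ) j, ⌊M * Int.fract (q * y j)⌋₊ < M := by
    intro q j
    rw [Nat.floor_lt (by positivity)]
    have := Int.fract_lt_one (q * y j)
    nlinarith
  let F : Fin (M ^ n + 1) → (Fin n → Fin M) := fun q j => ⟨⌊M * Int.fract ((q : ℕ) * y j)⌋₊, hbound q j⟩
  have main : ∀ a b : Fin (M ^ n + 1), a < b → F a = F b → 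
      ∃ q : ℕ, 0 < q ∧ q ≤ M ^ n ∧ ∃ p : Fin n → ℤ, ∀ j, |q * y j - p j| < 1 / M := by
    intro a b hab hF
    refine ⟨b - a, by have : (a : ℕ) < b := hab
                      omega, by omega, fun j => ⌊(b : ℕ) * y j⌋ - ⌊(a : ℕ) * y j⌋, fun j => ?_⟩
    have h1 : ⌊M * Int.fract ((a : ℕ) * y j)⌋₊ = ⌊M * Int.fract ((b : ℕ) * y j)⌋₊ := by
      have := congrFun hF j
      simpa [F] using this
    have ha := Nat.floor_le (show 0 ≤ M * Int.fract ((a : ℕ) * y j) by positivity)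
    have ha' := Nat.lt_floor_add_one (M * Int.fract ((a : ℕ) * y j))
    have hb := Nat.floor_le (show 0 ≤ M * Int.fract ((b : ℕ) * y j) by positivity)
    have hb' := Nat.lt_floor_add_one (M * Int.fract ((b : ℕ) * y j))
    rw [h1] at ha ha'
    have hab' : (a : ℕ) ≤ b := le_of_lt hab
    have e : ((b - a : ℕ) : ℝ) * y j - ((⌊(b : ℕ) * y j⌋ - ⌊(a : ℕ) * y j⌋ : ℤ) : ℝ)
        = Int.fract ((b : ℕ) * y j) - Int.fract ((a : ℕ) * y j) := by
      rw [Nat.cast_sub hab']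
      push_cast
      unfold Int.fract
      ring
    rw [e, lt_div_iff₀ hM']
    have h3 : |Int.fract ((b : ℕ) * y j) - Int.fract ((a : ℕ) * y j)| * M
        = |(Int.fract ((b : ℕ) * y j) - Int.fract ((a : ℕ) * y j)) * M| := by
      rw [abs_mul, abs_of_pos hM']
    rw [h3, abs_lt]
    constructor <;> nlinarith
  obtain ⟨a, b, hne, hab⟩ := Fintype.exists_ne_map_eq_of_card_lt F (by simp)
  rcases lt_or_gt_of_ne hne with h | h
  · exact main a b h hab
  · exact main b a h hab.symm

theorem IsGood.norm_le {n : ℕ} {E : Type} [NormedAddCommGroup E] [InnerProductSpace ℝ E] {D : ℝ}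
    {e : Fin n → E} (h : IsGood D e) {j k : Fin n} (hjk : j ≤ k) : ‖e j‖ ≤ D * ‖e k‖ := by
  have := h.1 j (Pi.single k 1) ⟨k, hjk, by simp⟩
  simp [Pi.single_apply] at this
  exact this.le

theorem IsGood.norm_pos {n : ℕ} {E : Type} [NormedAddCommGroup E] [InnerProductSpace ℝ E] {D : ℝ}
    (hD : 1 ≤ D) {e : Fin n → E} (h : IsGood D e) (k : Fin n) : 0 < ‖e k‖ := by
  have := h.1 k (Pi.single k 1) ⟨k, le_rfl, by simp⟩
  simp [Pi.single_apply] at this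
  by_contra h0
  have h1 : ‖e k‖ = 0 := le_antisymm (not_lt.1 h0) (norm_nonneg _)
  rw [h1] at this
  simp at this

theorem IsGood.inner_le {n : ℕ} {E : Type} [NormedAddCommGroup E] [InnerProductSpace ℝ E] {D : ℝ}
    (hD : 1 ≤ D) {e : Fin n → E} (h : IsGood D e) (i j : Fin n) :
    |inner ℝ (e i) (e j)| ≤ D ^ 2 * ‖e j‖ ^ 2 := by
  rcases lt_or_ge j i with hij | hij
  · exact (h.2 i j hij).le
  · have h1 := abs_real_inner_le_norm (e i) (e j)
    have h2 := h.norm_le hij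
    have h3 := norm_nonneg (e j)
    calc _ ≤ _ := h1
      _ ≤ D * ‖e j‖ * ‖e j‖ := by gcongr
      _ = D * ‖e j‖ ^ 2 := by ring
      _ ≤ D ^ 2 * ‖e j‖ ^ 2 := by gcongr; nlinarith

theorem good_gap (n : ℕ) (E : Type) [NormedAddCommGroup E] [InnerProductSpace ℝ E] (D : ℝ)
    (hD : 1 ≤ D) : ∃ δ : ℝ, 0 < δ ∧ ∀ e : Fin n → E, IsGood D e → ∀ (k : Fin n) (y : Fin n → ℝ),
      (∀ j, k < j → y j = 0) → δ * (|y k| * ‖e k‖) ≤ ‖∑ j, y j • e j‖ := by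
  obtain ⟨M, hM⟩ := exists_nat_gt (2 * n * D ^ 2)
  have hM0 : (0 : ℝ) < M := lt_of_le_of_lt (by positivity) hM
  have hMn : 0 < M := by exact_mod_cast hM0
  have hM1 : (1 : ℝ) ≤ M := by exact_mod_cast hMn
  have hinv : 1 / (M : ℝ) ≤ 1 := by rw [div_le_one hM0]; exact hM1
  have hD0 : 0 < D := by linarith
  have key : ∀ e : Fin n → E, IsGood D e → ∀ (k : Fin n) (y : Fin n → ℝ),
      (∀ j, k < j → y j = 0) → y k = 1 → ‖e k‖ ≤ 2 * D * M ^ n * ‖∑ j, y j • e j‖ := by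
    intro e he k y hy hyk
    obtain ⟨q, hq0, hqM, p, hp⟩ := dirichlet_simul n M hMn y
    have hpk : p k = q := by
      have := (hp k).trans_le hinv
      rw [hyk, mul_one] at this
      have h2 : |(q : ℤ) - p k| < 1 := by exact_mod_cast this
      rw [Int.abs_lt_one_iff] at h2
      omega
    have hpj : ∀ j, k < j → p j = 0 := by
      intro j hj
      have := (hp j).trans_le hinv
      rw [hy j hj, mul_zero, zero_sub, abs_neg] at this
      have h2 : |p j| < 1 := by exact_mod_cast this
      rwa [Int.abs_lt_one_iff] at h2
    have h1 := he.1 k p ⟨k, le_rfl, by rw [hpk]; exact_mod_cast hq0.ne'⟩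
    have h2 : ∑ j, (p j : ℝ) • e j = (q : ℝ) • ∑ j, y j • e j - ∑ j, (q * y j - p j) • e j := by
      rw [Finset.smul_sum, ← Finset.sum_sub_distrib]
      refine Finset.sum_congr rfl fun j _ => ?_
      rw [smul_smul, ← sub_smul]
      congr 1
      ring
    have h3 : ‖∑ j, (q * y j - p j) • e j‖ ≤ n * (1 / M * (D * ‖e k‖)) := by
      refine (norm_sum_le _ _).trans ?_
      have : ∀ j ∈ Finset.univ, ‖(q * y j - p j) • e j‖ ≤ 1 / M * (D * ‖e k‖) := by
        intro j _
        rw [norm_smul, Real.norm_eq_abs]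
        rcases le_or_gt j k with hjk | hjk
        · have := he.norm_le hjk
          have := (hp j).le
          gcongr
        · rw [hpj j hjk, hy j hjk]
          simp
          positivity
      refine (Finset.sum_le_card_nsmul _ _ _ this).trans ?_
      simp
    have h4 : ‖∑ j, (p j : ℝ) • e j‖ ≤ M ^ n * ‖∑ j, y j • e j‖ + n * (1 / M * (D * ‖e k‖)) := by
      rw [h2]
      refine (norm_sub_le _ _).trans ?_
      gcongr
      rw [norm_smul]
      gcongr
      simp
      exact_mod_cast hqM
    have h5 : D * (n * (1 / M * (D * ‖e k‖))) ≤ ‖e k‖ / 2 := by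
      have : D * (n * (1 / M * (D * ‖e k‖))) = (2 * n * D ^ 2) / M * (‖e k‖ / 2) := by
        field_simp
      rw [this]
      have h6 : (2 * n * D ^ 2) / M ≤ 1 := by rw [div_le_one hM0]; exact hM.le
      have := norm_nonneg (e k)
      nlinarith
    have h7 := mul_le_mul_of_nonneg_left h4 hD0.le
    nlinarith
  refine ⟨1 / (2 * D * M ^ n), by positivity, fun e he k y hy => ?_⟩
  by_cases h0 : y k = 0
  · simp [h0]
  have := key e he k (fun j => (y k)⁻¹ * y j) (fun j hj => by simp [hy j hj]) (by simp [h0])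
  have h2 : ∑ j, ((y k)⁻¹ * y j) • e j = (y k)⁻¹ • ∑ j, y j • e j := by
    rw [Finset.smul_sum]
    simp [smul_smul]
  rw [h2, norm_smul, norm_inv, Real.norm_eq_abs] at this
  have hy0 : 0 < |y k| := abs_pos.2 h0
  rw [div_mul_eq_mul_div, div_le_iff₀ (by positivity), one_mul]
  calc |y k| * ‖e k‖ ≤ |y k| * (2 * D * M ^ n * (|y k|⁻¹ * ‖∑ j, y j • e j‖)) := by gcongr
    _ = _ := by field_simp

theorem good_coord (n : ℕ) (E : Type) [NormedAddCommGroup E] [InnerProductSpace ℝ E] (D : ℝ)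
    (hD : 1 ≤ D) : ∃ K : ℝ, 1 ≤ K ∧ ∀ e : Fin n → E, IsGood D e → ∀ (k : Fin n) (y : Fin n → ℝ),
      |y k| * ‖e k‖ ≤ K * ‖∑ j, y j • e j‖ := by
  obtain ⟨δ, hδ, hgap⟩ := good_gap n E D hD
  have main : ∀ m : ℕ, ∃ K : ℝ, 1 ≤ K ∧ ∀ e : Fin n → E, IsGood D e → ∀ (k : Fin n)
      (y : Fin n → ℝ), n ≤ k + m → |y k| * ‖e k‖ ≤ K * ‖∑ j, y j • e j‖ := by
    intro m
    induction m with
    | zero => exact ⟨1, le_rfl, fun e he k y hk => by omega⟩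
    | succ m ih =>
      obtain ⟨K, hK, ih⟩ := ih
      have hK0 : 0 < K := by linarith
      refine ⟨K + (1 + n * K) / δ, by have : 0 ≤ (1 + n * K) / δ := by positivity
                                      linarith, fun e he k y hk => ?_⟩
      have h1 := hgap e he k (fun j => if k < j then 0 else y j) (fun j hj => by simp [hj])
      simp only [lt_irrefl, if_false] at h1
      have h2 : ∑ j, (if k < j then 0 else y j) • e j
          = ∑ j, y j • e j - ∑ j, (if k < j then y j else 0) • e j := by
        rw [← Finset.sum_sub_distrib]
        refine Finset.sum_congr rfl fun j _ => ?_
        split_ifs <;> simp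
      have h3 : ‖∑ j, (if k < j then y j else 0) • e j‖ ≤ n * (K * ‖∑ j, y j • e j‖) := by
        refine (norm_sum_le _ _).trans ?_
        refine (Finset.sum_le_card_nsmul _ _ (K * ‖∑ j, y j • e j‖) ?_).trans (by simp)
        intro j _
        split_ifs with hj
        · rw [norm_smul]
          have : (k : ℕ) < j := hj
          exact ih e he j y (by omega)
        · simp
          positivity
      have h4 := norm_sub_le (∑ j, y j • e j) (∑ j, (if k < j then y j else 0) • e j)
      rw [← h2] at h4
      have h5 : |y k| * ‖e k‖ ≤ (1 + n * K) / δ * ‖∑ j, y j • e j‖ := by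
        rw [div_mul_eq_mul_div, le_div_iff₀ hδ]
        nlinarith
      have := norm_nonneg (∑ j, y j • e j)
      nlinarith
  obtain ⟨K, hK, h⟩ := main n
  exact ⟨K, hK, fun e he k y => h e he k y (by omega)⟩

theorem good_finite (n : ℕ) (E : Type) [NormedAddCommGroup E] [InnerProductSpace ℝ E] (D : ℝ)
    (hD : 1 ≤ D) : ∃ L : ℝ, ∀ (e b : Fin n → E) (g h : Fin n → Fin n → ℤ), 
      IsGood D e → IsGood D b → (∀ i, b i = ∑ k, (g k i : ℝ) • e k) →
      (∀ i, e i = ∑ k, (h k i : ℝ) • b k) → ∀ k i, |(g k i : ℝ)| ≤ L := by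
  obtain ⟨K, hK, hcoord⟩ := good_coord n E D hD
  have hD0 : 0 < D := by linarith
  have hK0 : 0 < K := by linarith
  have main : ∀ m : ℕ, ∃ L : ℝ, 0 ≤ L ∧ ∀ (e b : Fin n → E) (g h : Fin n → Fin n → ℤ), 
      IsGood D e → IsGood D b → (∀ i, b i = ∑ k, (g k i : ℝ) • e k) →
      (∀ i, e i = ∑ k, (h k i : ℝ) • b k) → ∀ (k i : Fin n), n ≤ k + m → |(g k i : ℝ)| ≤ L := by
    intro m
    induction m with
    | zero => exact ⟨0, le_rfl, fun e b g h _ _ _ _ k i hk => by omega⟩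
    | succ m ih =>
      obtain ⟨L, hL, ih⟩ := ih
      set C3 : ℝ := n * (D ^ 2 * K ^ 2) + n * (L * D ^ 2) with hC3
      have hC30 : 0 ≤ C3 := by positivity
      refine ⟨L + K * (n * (K * C3 * D)), by positivity, fun e b g h he hb hbe heb k i hk => ?_⟩
      have hin : ∀ l, |inner ℝ (b i) (e l)| ≤ n * (D ^ 2 * K ^ 2) * ‖e l‖ ^ 2 := by
        intro l
        conv_lhs => rw [heb l, inner_sum]
        refine (Finset.abs_sum_le_sum_abs _ _).trans ?_
        refine (Finset.sum_le_card_nsmul _ _ (D ^ 2 * K ^ 2 * ‖e l‖ ^ 2) ?_).trans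
          (by simp [mul_assoc])
        intro j _
        rw [inner_smul_right, abs_mul]
        have h1 := hb.inner_le hD i j
        have h2 := hcoord b hb j (fun j => (h j l : ℝ))
        rw [← heb l] at h2
        have h3 : |(h j l : ℝ)| ≤ |(h j l : ℝ)| ^ 2 := by
          have : |h j l| ≤ |h j l| ^ 2 := by
            have := abs_nonneg (h j l)
            nlinarith [sq_nonneg (|h j l|)]
          exact_mod_cast this
        calc |(h j l : ℝ)| * |inner ℝ (b i) (b j)| 
            ≤ |(h j l : ℝ)| ^ 2 * (D ^ 2 * ‖b j‖ ^ 2) := by gcongr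
          _ = D ^ 2 * (|(h j l : ℝ)| * ‖b j‖) ^ 2 := by ring
          _ ≤ D ^ 2 * (K * ‖e l‖) ^ 2 := by gcongr
          _ = _ := by ring
      set x : E := ∑ j, (if k < j then (0 : ℝ) else g j i) • e j with hx
      have h2 : x = b i - ∑ j, (if k < j then (g j i : ℝ) else 0) • e j := by
        rw [hbe i, ← Finset.sum_sub_distrib]
        refine Finset.sum_congr rfl fun j _ => ?_
        split_ifs <;> simp
      have hxl : ∀ l, |inner ℝ x (e l)| ≤ C3 * ‖e l‖ ^ 2 := by
        intro l
        rw [h2, inner_sub_left, sum_inner]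
        refine (abs_sub _ _).trans ?_
        rw [hC3, add_mul]
        refine add_le_add (hin l) ?_
        refine (Finset.abs_sum_le_sum_abs _ _).trans ?_
        refine (Finset.sum_le_card_nsmul _ _ (L * D ^ 2 * ‖e l‖ ^ 2) ?_).trans
          (by simp [mul_assoc])
        intro j _
        split_ifs with hj
        · have : (k : ℕ) < j := hj
          rw [inner_smul_left, abs_mul, mul_assoc]
          have h3 := ih e b g h he hb hbe heb j i (by omega)
          have h4 := he.inner_le hD j l
          simp only [conj_trivial]
          gcongr
        · simp
          positivity
      have hxx : ‖x‖ * ‖x‖ ≤ n * (K * C3 * D) * ‖e k‖ * ‖x‖ := by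
        rw [← real_inner_self_eq_norm_mul_norm]
        conv_lhs => rw [hx, inner_sum]
        refine (le_abs_self _).trans ((Finset.abs_sum_le_sum_abs _ _).trans ?_)
        refine (Finset.sum_le_card_nsmul _ _ (K * C3 * D * ‖e k‖ * ‖x‖) ?_).trans
          (by simp [mul_assoc])
        intro j _
        have h3 := hcoord e he j (fun j => if k < j then (0 : ℝ) else g j i)
        rw [← hx] at h3 ⊢
        rw [inner_smul_right, abs_mul]
        rcases lt_or_ge k j with hj | hj
        · simp only [hj, if_true, abs_zero, zero_mul]
          positivity
        · have h4 := he.norm_le hj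
          calc _ ≤ |(if k < j then (0 : ℝ) else g j i)| * (C3 * ‖e j‖ ^ 2) := by
                gcongr; exact hxl j
            _ = C3 * (|(if k < j then (0 : ℝ) else g j i)| * ‖e j‖) * ‖e j‖ := by ring
            _ ≤ C3 * (K * ‖x‖) * (D * ‖e k‖) := by gcongr
            _ = _ := by ring
      have hxe : ‖x‖ ≤ n * (K * C3 * D) * ‖e k‖ := by
        rcases (norm_nonneg x).eq_or_lt with h0 | h0
        · rw [← h0]; positivity
        · exact le_of_mul_le_mul_right hxx h0
      have h5 := hcoord e he k (fun j => if k < j then (0 : ℝ) else g j i)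
      rw [← hx] at h5
      simp only [lt_irrefl, if_false] at h5
      have h6 := he.norm_pos hD k
      have h7 : |(g k i : ℝ)| * ‖e k‖ ≤ K * (n * (K * C3 * D)) * ‖e k‖ := by
        refine h5.trans ?_
        rw [mul_assoc K]
        gcongr
      have h8 := le_of_mul_le_mul_right h7 h6
      linarith
  obtain ⟨L, hL, h⟩ := main n
  exact ⟨L, fun e b g h' he hb h1 h2 k i => h e b g h' he hb h1 h2 k i (by omega)⟩

/-- Elementary unipotent matrices. -/
theorem exists_unip {n : ℕ} (i : Fin n) (p : Fin n → ℤ) (hp : p i = 0) :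
    ∃ u : GL (Fin n) ℤ, ∀ y : Fin n → ℤ, u.1 *ᵥ y = y + y i • p := by
  have h0 : vecMulVec p (Pi.single i (1 : ℤ)) * vecMulVec p (Pi.single i (1 : ℤ)) = 0 := by
    ext a b
    simp [Matrix.mul_apply, vecMulVec_apply, Pi.single_apply, hp]
  refine ⟨⟨1 + vecMulVec p (Pi.single i 1), 1 - vecMulVec p (Pi.single i 1), ?_, ?_⟩, ?_⟩
  · rw [mul_sub, add_mul, add_mul, h0]; simp
  · rw [sub_mul, mul_add, mul_add, h0]; simp
  · intro y
    change (1 + vecMulVec p (Pi.single i 1)) *ᵥ y = _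
    rw [Matrix.add_mulVec, Matrix.one_mulVec]
    congr 1
    ext a
    simp [Matrix.mulVec, dotProduct, vecMulVec_apply, Pi.single_apply, mul_comm]

/-- A vector supported on the indices `≥ i` is a multiple of a vector that completes the
first basis vectors. -/
theorem exists_tail {n : ℕ} (i : Fin n) (N : ℕ) : ∀ (y : Fin n → ℤ), (∑ j, (y j).natAbs) ≤ N →
    (∀ j, j < i → y j = 0) → (∃ j, y j ≠ 0) →
    ∃ (h : GL (Fin n) ℤ) (m : ℤ), (∀ j, j < i → h.1 *ᵥ Pi.single j 1 = Pi.single j 1) ∧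
      y = m • (h.1 *ᵥ Pi.single i 1) := by
  induction N with
  | zero =>
    rintro y hN - ⟨j, hj⟩
    have := Finset.single_le_sum (f := fun j => (y j).natAbs) (fun _ _ => Nat.zero_le _)
      (Finset.mem_univ j)
    exfalso
    omega
  | succ N ih =>
    rintro y hN hlow ⟨j, hj⟩
    by_cases htwo : ∃ j k, j ≠ k ∧ y j ≠ 0 ∧ y k ≠ 0
    · obtain ⟨j, k, hjk, hyj, hyk, hle⟩ : ∃ j k, j ≠ k ∧ y j ≠ 0 ∧ y k ≠ 0 ∧
          (y k).natAbs ≤ (y j).natAbs := by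
        obtain ⟨j, k, hjk, hyj, hyk⟩ := htwo
        rcases le_total (y k).natAbs (y j).natAbs with h | h
        · exact ⟨j, k, hjk, hyj, hyk, h⟩
        · exact ⟨k, j, hjk.symm, hyk, hyj, h⟩
      obtain ⟨c, hc⟩ : ∃ c : ℤ, (y j + y k * c).natAbs < (y j).natAbs := by
        rcases lt_or_gt_of_ne hyj with h1 | h1 <;> rcases lt_or_gt_of_ne hyk with h2 | h2
        · exact ⟨-1, by omega⟩
        · exact ⟨1, by omega⟩
        · exact ⟨1, by omega⟩
        · exact ⟨-1, by omega⟩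
      have hki : i ≤ k := by
        by_contra h
        exact hyk (hlow k (not_le.1 h))
      have hji : i ≤ j := by
        by_contra h
        exact hyj (hlow j (not_le.1 h))
      obtain ⟨u, hu⟩ := exists_unip k (Pi.single j c) (by simp [hjk.symm])
      have hval : ∀ l, l ≠ j → (u.1 *ᵥ y) l = y l := by
        intro l hl
        rw [hu]
        simp [hl]
      have hvalj : (u.1 *ᵥ y) j = y j + y k * c := by
        rw [hu]
        simp
      obtain ⟨h, m, hh, hm⟩ := ih (u.1 *ᵥ y) (by
          have : ∑ l, ((u.1 *ᵥ y) l).natAbs < ∑ l, (y l).natAbs := by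
            refine Finset.sum_lt_sum (fun l _ => ?_) ⟨j, Finset.mem_univ _, ?_⟩
            · by_cases hl : l = j
              · rw [hl, hvalj]; exact hc.le
              · rw [hval l hl]
            · rw [hvalj]; exact hc
          omega)
        (fun l hl => by rw [hval l (by rintro rfl; exact absurd hl (not_lt.2 hji))]; exact hlow l hl)
        ⟨k, by rw [hval k hjk.symm]; exact hyk⟩
      have hinv : ∀ v : Fin n → ℤ, (u⁻¹ : GL (Fin n) ℤ).1 *ᵥ (u.1 *ᵥ v) = v := by
        intro v
        rw [Matrix.mulVec_mulVec, ← Units.val_mul, inv_mul_cancel]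
        simp
      refine ⟨u⁻¹ * h, m, fun l hl => ?_, ?_⟩
      · rw [Units.val_mul, ← Matrix.mulVec_mulVec, hh l hl]
        have : u.1 *ᵥ Pi.single l 1 = Pi.single l 1 := by
          rw [hu]
          have : k ≠ l := by rintro rfl; exact absurd hl (not_lt.2 hki)
          simp [this]
        conv_lhs => rw [← this]
        exact hinv _
      · rw [Units.val_mul, ← Matrix.mulVec_mulVec, ← Matrix.mulVec_smul, ← hm, hinv]
    · have hone : ∀ k, k ≠ j → y k = 0 := by
        intro k hk
        by_contra h
        exact htwo ⟨j, k, hk.symm, hj, h⟩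
      have hy : y = y j • Pi.single j 1 := by
        ext k
        by_cases hk : k = j
        · subst hk; simp
        · simp [hk, hone k hk]
      have hji : i ≤ j := by
        by_contra h
        exact hj (hlow j (not_le.1 h))
      by_cases hij : j = i
      · subst hij
        exact ⟨1, y j, fun _ _ => by rw [Units.val_one, Matrix.one_mulVec],
          by rw [Units.val_one, Matrix.one_mulVec]; exact hy⟩
      · obtain ⟨u, hu⟩ := exists_unip i (Pi.single j 1) (by simp [Ne.symm hij])
        obtain ⟨v, hv⟩ := exists_unip j (Pi.single i (-1)) (by simp [hij])
        refine ⟨v * u, y j, fun l hl => ?_, ?_⟩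
        · have h1 : i ≠ l := hl.ne'
          have h2 : j ≠ l := (hl.trans_le hji).ne'
          rw [Units.val_mul, ← Matrix.mulVec_mulVec, hu, hv]
          simp [h1, h2]
        · conv_lhs => rw [hy]
          congr 1
          rw [Units.val_mul, ← Matrix.mulVec_mulVec, hu, hv]
          ext k
          simp [Pi.single_apply, Ne.symm hij]
          by_cases h1 : k = i <;> by_cases h2 : k = j <;> simp [h1, h2, hij, Ne.symm hij]

/-- Successively minimal bases exist. -/
theorem exists_minimal {n : ℕ} (N : (Fin n → ℤ) → ℝ)
    (hfin : ∀ R : ℝ, {x | N x ≤ R}.Finite) :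
    ∃ g : GL (Fin n) ℤ, ∀ (j : Fin n) (g' : GL (Fin n) ℤ),
      (∀ l, l < j → g'.1 *ᵥ Pi.single l 1 = g.1 *ᵥ Pi.single l 1) →
      N (g.1 *ᵥ Pi.single j 1) ≤ N (g'.1 *ᵥ Pi.single j 1) := by
  have main : ∀ i : ℕ, ∃ g : GL (Fin n) ℤ, ∀ (j : Fin n), (j : ℕ) < i → ∀ (g' : GL (Fin n) ℤ),
      (∀ l, l < j → g'.1 *ᵥ Pi.single l 1 = g.1 *ᵥ Pi.single l 1) →
      N (g.1 *ᵥ Pi.single j 1) ≤ N (g'.1 *ᵥ Pi.single j 1) := by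
    intro i
    induction i with
    | zero => exact ⟨1, fun j hj => by omega⟩
    | succ i ih =>
      obtain ⟨g, hg⟩ := ih
      by_cases hi : i < n
      · let k : Fin n := ⟨i, hi⟩
        let S : Set (Fin n → ℤ) := {x | N x ≤ N (g.1 *ᵥ Pi.single k 1) ∧ 
          ∃ g' : GL (Fin n) ℤ, (∀ l, l < k → g'.1 *ᵥ Pi.single l 1 = g.1 *ᵥ Pi.single l 1) ∧ 
            x = g'.1 *ᵥ Pi.single k 1}
        have hS : S.Finite := (hfin (N (g.1 *ᵥ Pi.single k 1))).subset fun x hx => hx.1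
        obtain ⟨x, ⟨hx1, g1, hg1, rfl⟩, hmin⟩ := Set.exists_min_image S N hS 
          ⟨g.1 *ᵥ Pi.single k 1, le_rfl, g, fun _ _ => rfl, rfl⟩
        refine ⟨g1, fun j hj g' hg' => ?_⟩
        rcases Nat.lt_succ_iff_lt_or_eq.1 hj with hj | hj
        · have hjk : j < k := hj
          rw [hg1 j hjk]
          exact hg j hj g' fun l hl => (hg' l hl).trans (hg1 l (hl.trans hjk))
        · have hjk : j = k := Fin.ext hj
          rw [hjk] at hg' ⊢
          by_cases hle : N (g'.1 *ᵥ Pi.single k 1) ≤ N (g.1 *ᵥ Pi.single k 1)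
          · exact hmin _ ⟨hle, g', fun l hl => (hg' l hl).trans (hg1 l hl), rfl⟩
          · exact hx1.trans (not_le.1 hle).le
      · exact ⟨g, fun j hj => hg j (by omega)⟩
  obtain ⟨g, hg⟩ := main n
  exact ⟨g, fun j => hg j j.2⟩

theorem exists_good {n : ℕ} {E : Type} [NormedAddCommGroup E] [InnerProductSpace ℝ E]
    (φ : (Fin n → ℤ) →+ E) (hinj : ∀ x, φ x = 0 → x = 0)
    (hfin : ∀ R : ℝ, {x | ‖φ x‖ ≤ R}.Finite) :
    ∃ g : GL (Fin n) ℤ, IsGood (((n : ℝ) + 1) ^ n + 1) (fun i => φ (g.1 *ᵥ Pi.single i 1)) := by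
  obtain ⟨g, hg⟩ := exists_minimal (fun x => ‖φ x‖) hfin
  -- minimality in a convenient form
  have hmin : ∀ (i : Fin n) (h : GL (Fin n) ℤ) (p : Fin n → ℤ),
      (∀ j, j < i → h.1 *ᵥ Pi.single j 1 = Pi.single j 1) → (∀ j, i ≤ j → p j = 0) →
      ‖φ (g.1 *ᵥ Pi.single i 1)‖ ≤ ‖φ (g.1 *ᵥ (h.1 *ᵥ Pi.single i 1 + p))‖ := by
    intro i h p hh hp
    obtain ⟨u, hu⟩ := exists_unip i p (hp i le_rfl)
    have hhp : h.1 *ᵥ p = p := by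
      have e : p = ∑ j, p j • Pi.single j (1 : ℤ) := by
        ext k
        simp [Finset.sum_apply, Pi.single_apply]
      conv_lhs => rw [e]
      conv_rhs => rw [e]
      rw [Matrix.mulVec_sum]
      refine Finset.sum_congr rfl fun j _ => ?_
      rw [Matrix.mulVec_smul]
      rcases lt_or_ge j i with hj | hj
      · rw [hh j hj]
      · rw [hp j hj]; simp
    have := hg i (g * h * u) (fun l hl => by
      rw [Units.val_mul, Units.val_mul, ← Matrix.mulVec_mulVec, ← Matrix.mulVec_mulVec, hu]
      simp [hl.ne', hh l hl])
    rw [Units.val_mul, Units.val_mul, ← Matrix.mulVec_mulVec, ← Matrix.mulVec_mulVec, hu] at this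
    simpa [Matrix.mulVec_add, hhp] using this
  have hsum : ∀ x : Fin n → ℤ, ∑ j, (x j : ℝ) • φ (g.1 *ᵥ Pi.single j 1) = φ (g.1 *ᵥ x) := by
    intro x
    have e : x = ∑ j, x j • Pi.single j (1 : ℤ) := by
      ext k
      simp [Finset.sum_apply, Pi.single_apply]
    conv_rhs => rw [e]
    rw [Matrix.mulVec_sum, map_sum]
    refine Finset.sum_congr rfl fun j _ => ?_
    rw [Matrix.mulVec_smul, map_zsmul, Int.cast_smul_eq_zsmul]
  have hginj : ∀ x : Fin n → ℤ, g.1 *ᵥ x = 0 → x = 0 := by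
    intro x hx
    have : (g⁻¹ : GL (Fin n) ℤ).1 *ᵥ (g.1 *ᵥ x) = x := by
      rw [Matrix.mulVec_mulVec, ← Units.val_mul, inv_mul_cancel]
      simp
    rw [hx] at this
    simpa using this.symm
  have hpos : ∀ x : Fin n → ℤ, (∃ j, x j ≠ 0) → 0 < ‖φ (g.1 *ᵥ x)‖ := by
    rintro x ⟨j, hj⟩
    rw [norm_pos_iff]
    intro h
    exact hj (by rw [hginj x (hinj _ h)]; rfl)
  have hbound : ∀ (k : ℕ) (i : Fin n) (c : Fin n → ℤ), (i : ℕ) < k → (∃ j, i ≤ j ∧ c j ≠ 0) → 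
      ‖φ (g.1 *ᵥ Pi.single i 1)‖ ≤ ((n : ℝ) + 1) ^ k * ‖φ (g.1 *ᵥ c)‖ := by
    intro k
    induction k with
    | zero => intro i c hi; omega
    | succ k ih =>
      rintro i c hi ⟨j0, hij0, hj0⟩
      obtain ⟨h, m, hh, hm⟩ := exists_tail i _ (fun j => if j < i then 0 else c j) le_rfl
        (fun j hj => by simp [hj]) ⟨j0, by simpa [not_lt.2 hij0] using hj0⟩
      have hm0 : m ≠ 0 := by
        rintro rfl
        have := congrFun hm j0
        simp [not_lt.2 hij0] at this
        exact hj0 this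
      let p : Fin n → ℤ := fun j => if j < i then c j / m else 0
      let r : Fin n → ℤ := fun j => if j < i then c j % m else 0
      have e1 : m • (h.1 *ᵥ Pi.single i 1 + p) = c - r := by
        rw [smul_add, ← hm]
        ext j
        simp only [Pi.add_apply, Pi.smul_apply, Pi.sub_apply, p, r, smul_eq_mul]
        split_ifs with hj
        · have := Int.mul_ediv_add_emod (c j) m
          linarith
        · simp
      have h1 := hmin i h p hh (fun j hj => by simp [p, not_lt.2 hj])
      have e2 : (m : ℝ) • φ (g.1 *ᵥ (h.1 *ᵥ Pi.single i 1 + p)) = φ (g.1 *ᵥ c) - φ (g.1 *ᵥ r) := by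
        rw [Int.cast_smul_eq_zsmul, ← map_zsmul, ← Matrix.mulVec_smul, e1, Matrix.mulVec_sub, map_sub]
      have h2 : |(m : ℝ)| * ‖φ (g.1 *ᵥ (h.1 *ᵥ Pi.single i 1 + p))‖
          ≤ ‖φ (g.1 *ᵥ c)‖ + ‖φ (g.1 *ᵥ r)‖ := by
        rw [← Real.norm_eq_abs, ← norm_smul, e2]
        exact norm_sub_le _ _
      have hm1 : (1 : ℝ) ≤ |(m : ℝ)| := by
        have := Int.one_le_abs hm0
        exact_mod_cast this
      have h3 : ‖φ (g.1 *ᵥ r)‖ ≤ n * (|(m : ℝ)| * (((n : ℝ) + 1) ^ k * ‖φ (g.1 *ᵥ c)‖)) := by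
        rw [← hsum r]
        refine (norm_sum_le _ _).trans ?_
        refine (Finset.sum_le_card_nsmul _ _
          (|(m : ℝ)| * (((n : ℝ) + 1) ^ k * ‖φ (g.1 *ᵥ c)‖)) ?_).trans (by simp)
        intro j _
        rw [norm_smul]
        by_cases hj : j < i
        · have h4 : ‖(r j : ℝ)‖ ≤ |(m : ℝ)| := by
            have h5 := Int.emod_nonneg (c j) hm0
            have h6 := Int.emod_lt_abs (c j) hm0
            have : |r j| ≤ |m| := by
              simp only [r, hj, if_true]
              rw [abs_of_nonneg h5]
              exact h6.le
            rw [Real.norm_eq_abs]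
            exact_mod_cast this
          have h5 := ih j c (by have : (j : ℕ) < i := hj
                                omega) ⟨j0, hj.le.trans hij0, hj0⟩
          gcongr
        · simp [r, hj]
          positivity
      have h6 : (1 : ℝ) ≤ ((n : ℝ) + 1) ^ k := one_le_pow₀ (by linarith [(Nat.cast_nonneg n : (0:ℝ) ≤ n)])
      have h0 := norm_nonneg (φ (g.1 *ᵥ c))
      have h7 : |(m : ℝ)| * ‖φ (g.1 *ᵥ Pi.single i 1)‖ ≤
          |(m : ℝ)| * (((n : ℝ) + 1) ^ (k + 1) * ‖φ (g.1 *ᵥ c)‖) := by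
        calc |(m : ℝ)| * ‖φ (g.1 *ᵥ Pi.single i 1)‖ 
            ≤ |(m : ℝ)| * ‖φ (g.1 *ᵥ (h.1 *ᵥ Pi.single i 1 + p))‖ := by gcongr
          _ ≤ 1 * 1 * ‖φ (g.1 *ᵥ c)‖ + n * (|(m : ℝ)| * (((n : ℝ) + 1) ^ k * ‖φ (g.1 *ᵥ c)‖)) := by
              linarith
          _ ≤ |(m : ℝ)| * ((n : ℝ) + 1) ^ k * ‖φ (g.1 *ᵥ c)‖
              + n * (|(m : ℝ)| * (((n : ℝ) + 1) ^ k * ‖φ (g.1 *ᵥ c)‖)) := by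
              gcongr
          _ = _ := by ring
      exact le_of_mul_le_mul_left h7 (by linarith)
  have hD1 : (1 : ℝ) ≤ ((n : ℝ) + 1) ^ n + 1 := by
    have : 0 ≤ ((n : ℝ) + 1) ^ n := by positivity
    linarith
  refine ⟨g, fun i x hx => ?_, fun i j hij => ?_⟩
  · rw [hsum]
    have h1 := hbound n i x i.2 hx
    obtain ⟨j, -, hj⟩ := hx
    have h2 := hpos x ⟨j, hj⟩
    nlinarith
  · have hp : 0 < ‖φ (g.1 *ᵥ Pi.single j 1)‖ := hpos _ ⟨j, by simp⟩
    have key : ∀ s : ℤ, ‖φ (g.1 *ᵥ Pi.single i 1)‖ ≤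
        ‖φ (g.1 *ᵥ Pi.single i 1) + (s : ℝ) • φ (g.1 *ᵥ Pi.single j 1)‖ := by
      intro s
      have := hmin i 1 (s • Pi.single j 1)
        (fun _ _ => by rw [Units.val_one, Matrix.one_mulVec]) (fun l hl => by
        have : l ≠ j := (hij.trans_le hl).ne'
        simp [this])
      rw [Units.val_one, Matrix.one_mulVec] at this
      simpa [Matrix.mulVec_add, Matrix.mulVec_smul, -zsmul_eq_mul, Int.cast_smul_eq_zsmul] using this
    have k1 := key 1
    have k2 := key (-1)
    have k1' := mul_self_le_mul_self (norm_nonneg _) k1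
    have k2' := mul_self_le_mul_self (norm_nonneg _) k2
    simp only [Int.cast_one, one_smul, Int.cast_neg, neg_smul, ← sub_eq_add_neg] at k1' k2'
    rw [norm_add_mul_self_real] at k1'
    rw [norm_sub_mul_self_real] at k2'
    have h4 : |inner ℝ (φ (g.1 *ᵥ Pi.single i 1)) (φ (g.1 *ᵥ Pi.single j 1))| * 2
        ≤ ‖φ (g.1 *ᵥ Pi.single j 1)‖ ^ 2 := by
      rw [← le_div_iff₀ (by norm_num), abs_le]
      constructor <;> nlinarith
    have h5 : 1 ≤ (((n : ℝ) + 1) ^ n + 1) ^ 2 := one_le_pow₀ hD1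
    have h6 : 0 < ‖φ (g.1 *ᵥ Pi.single j 1)‖ ^ 2 := by positivity
    nlinarith

open scoped MatrixOrder ComplexOrder in
theorem posDef_exists_root {n : ℕ} {Q : Matrix (Fin n) (Fin n) ℝ} (h : Q.PosDef) :
   ∃ A : Matrix (Fin n) (Fin n) ℝ, Q = Aᵀ * A := by
  have h0 : (0 : Matrix (Fin n) (Fin n) ℝ) ≤ Q := h.posSemidef.nonneg
  have := CFC.sqrt_mul_sqrt_self Q h0
  refine ⟨CFC.sqrt Q, ?_⟩
  have h2 : (CFC.sqrt Q).PosSemidef := (CFC.sqrt_nonneg Q).posSemidef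
  have h3 := h2.1
  rw [IsHermitian, conjTranspose_eq_transpose_of_trivial] at h3
  rw [h3, this]

/-- Quadratic form attached to a matrix. -/
def qf {n : ℕ} (Q : Matrix (Fin n) (Fin n) ℝ) (x : Fin n → ℝ) : ℝ := x ⬝ᵥ (Q *ᵥ x)

/-- The almost Minkowski reduced forms. -/
def goodSet {n : ℕ} (D : ℝ) : Set (Matrix (Fin n) (Fin n) ℝ) :=
  {Q | (∀ (i : Fin n) (x : Fin n → ℤ), (∃ j, i ≤ j ∧ x j ≠ 0) →
      Q i i < D ^ 2 * qf Q (fun j => (x j : ℝ))) ∧ ∀ i j, j < i → |Q i j| < D ^ 2 * Q j j}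

/-- Columns as Euclidean vectors. -/
noncomputable def colv {n : ℕ} (A : Matrix (Fin n) (Fin n) ℝ) (i : Fin n) :
    EuclideanSpace ℝ (Fin n) := WithLp.toLp 2 (fun k => A k i)

theorem inner_colv {n : ℕ} (A : Matrix (Fin n) (Fin n) ℝ) (i j : Fin n) :
    inner ℝ (colv A i) (colv A j) = (Aᵀ * A) i j := by
  simp [colv, PiLp.inner_apply, Matrix.mul_apply, mul_comm]

theorem sum_colv {n : ℕ} (A : Matrix (Fin n) (Fin n) ℝ) (y : Fin n → ℝ) :
    ∑ j, y j • colv A j = WithLp.toLp 2 (A *ᵥ y) := by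
  ext k
  simp [colv, Matrix.mulVec, dotProduct, mul_comm]

theorem norm_sq_toLp {n : ℕ} (A : Matrix (Fin n) (Fin n) ℝ) (y : Fin n → ℝ) :
    ‖(WithLp.toLp 2 (A *ᵥ y) : EuclideanSpace ℝ (Fin n))‖ ^ 2 = qf (Aᵀ * A) y := by
  rw [← real_inner_self_eq_norm_sq, qf, ← Matrix.mulVec_mulVec, Matrix.mulVec_transpose,
    dotProduct_comm, ← Matrix.dotProduct_mulVec]
  rw [PiLp.inner_apply]
  simp [dotProduct, sq]

theorem isGood_iff {n : ℕ} {D : ℝ} (hD : 0 < D) (A : Matrix (Fin n) (Fin n) ℝ) :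
    IsGood D (colv A) ↔ Aᵀ * A ∈ goodSet D := by
  have h1 : ∀ i, ‖colv A i‖ ^ 2 = (Aᵀ * A) i i := fun i => by
    rw [← inner_colv, real_inner_self_eq_norm_sq]
  unfold IsGood goodSet
  simp only [Set.mem_setOf_eq, inner_colv, h1]
  refine and_congr_left fun _ => forall_congr' fun i => forall_congr' fun x =>
    imp_congr_right fun _ => ?_
  rw [← norm_sq_toLp, ← h1, ← sum_colv, ← mul_pow, sq_lt_sq₀ (norm_nonneg _) (by positivity)]

/-- Integral matrices seen as real ones. -/
noncomputable def realM {n : ℕ} (g : GL (Fin n) ℤ) : Matrix (Fin n) (Fin n) ℝ :=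
  g.1.map (Int.castRingHom ℝ)

theorem realM_mul {n : ℕ} (g h : GL (Fin n) ℤ) : realM (g * h) = realM g * realM h := by
  simp only [realM, Units.val_mul, Matrix.map_mul]

theorem realM_one {n : ℕ} : realM (1 : GL (Fin n) ℤ) = 1 := by
  simp [realM]

theorem realM_inv_mul {n : ℕ} (g : GL (Fin n) ℤ) : realM g⁻¹ * realM g = 1 := by
  rw [← realM_mul, inv_mul_cancel, realM_one]

theorem realM_mul_inv {n : ℕ} (g : GL (Fin n) ℤ) : realM g * realM g⁻¹ = 1 := by
  rw [← realM_mul, mul_inv_cancel, realM_one]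

theorem realM_apply {n : ℕ} (g : GL (Fin n) ℤ) (i j : Fin n) : realM g i j = (g.1 i j : ℝ) := by
  simp [realM]

/-- The action on forms. -/
noncomputable def act {n : ℕ} (Q : Matrix (Fin n) (Fin n) ℝ) (g : GL (Fin n) ℤ) :
    Matrix (Fin n) (Fin n) ℝ := (realM g)ᵀ * Q * realM g

theorem act_mul {n : ℕ} (Q : Matrix (Fin n) (Fin n) ℝ) (g h : GL (Fin n) ℤ) :
    act Q (g * h) = act (act Q g) h := by
  simp only [act, realM_mul, Matrix.transpose_mul, Matrix.mul_assoc]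

theorem act_one {n : ℕ} (Q : Matrix (Fin n) (Fin n) ℝ) : act Q 1 = Q := by
  simp [act, realM_one]

theorem act_posDef {n : ℕ} {Q : Matrix (Fin n) (Fin n) ℝ} (h : Q.PosDef) (g : GL (Fin n) ℤ) :
    (act Q g).PosDef := by
  have hu : Function.Injective (realM g).mulVec :=
    Function.LeftInverse.injective (g := (realM g⁻¹).mulVec) fun v => by
      rw [Matrix.mulVec_mulVec, realM_inv_mul, Matrix.one_mulVec]
  have := h.conjTranspose_mul_mul_same hu
  rwa [conjTranspose_eq_transpose_of_trivial] at this

theorem act_gram {n : ℕ} (A : Matrix (Fin n) (Fin n) ℝ) (g : GL (Fin n) ℤ) :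
    act (Aᵀ * A) g = (A * realM g)ᵀ * (A * realM g) := by
  simp only [act, Matrix.transpose_mul, Matrix.mul_assoc]

theorem qf_lower {n : ℕ} {Q : Matrix (Fin n) (Fin n) ℝ} (h : Q.PosDef) :
    ∃ c : ℝ, 0 < c ∧ ∀ x : Fin n → ℝ, c * ‖x‖ ^ 2 ≤ qf Q x := by
  obtain ⟨A, rfl⟩ := posDef_exists_root h
  have hinj : LinearMap.ker (Matrix.mulVecLin A) = ⊥ := by
    rw [LinearMap.ker_eq_bot']
    intro x hx
    by_contra hne
    have := h.dotProduct_mulVec_pos hne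
    rw [← Matrix.mulVec_mulVec] at this
    simp only [Matrix.mulVecLin_apply] at hx
    simp [hx] at this
  obtain ⟨K, hK, hA⟩ := LinearMap.exists_antilipschitzWith _ hinj
  have hK' : (0 : ℝ) < K := by exact_mod_cast hK
  refine ⟨((K : ℝ) ^ 2)⁻¹, by positivity, fun x => ?_⟩
  have h1 := hA.le_mul_dist x 0
  simp only [dist_zero_right, map_zero, Matrix.mulVecLin_apply] at h1
  have h2 : ‖A *ᵥ x‖ ≤ ‖(WithLp.toLp 2 (A *ᵥ x) : EuclideanSpace ℝ (Fin n))‖ := by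
    rw [pi_norm_le_iff_of_nonneg (norm_nonneg _)]
    intro i
    exact PiLp.norm_apply_le (WithLp.toLp 2 (A *ᵥ x) : EuclideanSpace ℝ (Fin n)) i
  rw [← norm_sq_toLp, inv_mul_le_iff₀ (by positivity), ← mul_pow]
  exact pow_le_pow_left₀ (norm_nonneg _) (h1.trans (mul_le_mul_of_nonneg_left h2 hK'.le)) 2

theorem int_finite {n : ℕ} (R : ℝ) :
    {x : Fin n → ℤ | ‖(fun j => (x j : ℝ))‖ ≤ R}.Finite := by
  refine (Set.finite_Icc (fun _ : Fin n => -⌈R⌉) (fun _ => ⌈R⌉)).subset fun x hx => ?_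
  have : ∀ i, |(x i : ℝ)| ≤ R := fun i => (norm_le_pi_norm (fun j => (x j : ℝ)) i).trans hx
  refine ⟨fun i => ?_, fun i => ?_⟩
  · have h1 := (abs_le.1 (this i)).1
    have h2 := Int.le_ceil R
    have : (-(⌈R⌉ : ℤ) : ℝ) ≤ x i := by linarith
    exact_mod_cast this
  · have h1 := (abs_le.1 (this i)).2
    have h2 := Int.le_ceil R
    have : (x i : ℝ) ≤ (⌈R⌉ : ℤ) := by linarith
    exact_mod_cast this

theorem qf_bdd_finite {n : ℕ} {Q : Matrix (Fin n) (Fin n) ℝ} (h : Q.PosDef) (R : ℝ) :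
    {x : Fin n → ℤ | qf Q (fun j => (x j : ℝ)) ≤ R}.Finite := by
  obtain ⟨c, hc, hx⟩ := qf_lower h
  refine (int_finite (n := n) (|R| / c + 1)).subset fun x hxR => ?_
  have h1 := (hx _).trans hxR
  have h2 : ‖(fun j => (x j : ℝ))‖ ^ 2 ≤ |R| / c := by
    rw [le_div_iff₀ hc]; nlinarith [le_abs_self R]
  have h3 : 0 ≤ |R| / c := by positivity
  simp only [Set.mem_setOf_eq]
  nlinarith [norm_nonneg (fun j => (x j : ℝ)), sq_nonneg (‖(fun j => (x j : ℝ))‖ - 1)]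

theorem exists_act_good {n : ℕ} {Q : Matrix (Fin n) (Fin n) ℝ} (h : Q.PosDef) :
    ∃ g : GL (Fin n) ℤ, act Q g ∈ goodSet (((n : ℝ) + 1) ^ n + 1) := by
  obtain ⟨A, rfl⟩ := posDef_exists_root h
  let φ : (Fin n → ℤ) →+ EuclideanSpace ℝ (Fin n) :=
    { toFun := fun x => WithLp.toLp 2 (A *ᵥ (fun j => (x j : ℝ)))
      map_zero' := by ext; simp [Matrix.mulVec, dotProduct]
      map_add' := fun x y => by
        ext; simp [Matrix.mulVec, dotProduct, mul_add, Finset.sum_add_distrib] }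
  have hφ : ∀ x, ‖φ x‖ ^ 2 = qf (Aᵀ * A) (fun j => (x j : ℝ)) := fun x => norm_sq_toLp A _
  obtain ⟨g, hg⟩ := exists_good φ (fun x hx => by
      obtain ⟨c, hc, hl⟩ := qf_lower h
      have h1 := hl (fun j => (x j : ℝ))
      rw [← hφ, hx, norm_zero] at h1
      have h2 : ‖(fun j => (x j : ℝ))‖ ^ 2 ≤ 0 := by
        by_contra hh
        push Not at hh
        nlinarith [mul_pos hc hh]
      have h3 : (fun j => (x j : ℝ)) = 0 := by
        rw [← norm_eq_zero]
        nlinarith [norm_nonneg (fun j => (x j : ℝ))]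
      ext j
      have := congrFun h3 j
      simpa using this)
    (fun R => by
      refine (qf_bdd_finite h (|R| ^ 2)).subset fun x hx => ?_
      simp only [Set.mem_setOf_eq] at hx ⊢
      rw [← hφ]
      exact pow_le_pow_left₀ (norm_nonneg _) (hx.trans (le_abs_self R)) 2)
  refine ⟨g, ?_⟩
  rw [act_gram, ← isGood_iff (by positivity)]
  convert hg using 2 with i
  ext i
  simp [φ, colv, Matrix.mul_apply, realM_apply, Matrix.mulVec, dotProduct]

/-- The set of matrices moving a good form to a good form. -/
def Tset (n : ℕ) (D : ℝ) : Set (GL (Fin n) ℤ) :=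
  {s | ∃ Q : Matrix (Fin n) (Fin n) ℝ, Q.PosDef ∧ Q ∈ goodSet D ∧ act Q s ∈ goodSet D}

theorem Tset_finite (n : ℕ) (D : ℝ) (hD : 1 ≤ D) : (Tset n D).Finite := by
  obtain ⟨L, hL⟩ := good_finite n (EuclideanSpace ℝ (Fin n)) D hD
  have hfin : (Set.Icc (fun _ _ => -⌈L⌉) (fun _ _ => ⌈L⌉) : Set (Fin n → Fin n → ℤ)).Finite :=
    Set.finite_Icc _ _
  refine Set.Finite.of_finite_image (f := fun s : GL (Fin n) ℤ => fun i j => s.1 i j)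
    (hfin.subset ?_) ?_
  · rintro _ ⟨s, ⟨Q, hQ, h1, h2⟩, rfl⟩
    obtain ⟨A, rfl⟩ := posDef_exists_root hQ
    rw [act_gram, ← isGood_iff (by positivity)] at h2
    rw [← isGood_iff (by positivity)] at h1
    have key := hL _ _ (fun i j => s.1 i j) (fun i j => s⁻¹.1 i j) h1 h2 (fun i => by
        rw [sum_colv A (fun k => (s.1 k i : ℝ))]
        ext k
        simp [colv, Matrix.mul_apply, realM_apply, Matrix.mulVec, dotProduct])
      (fun i => by
        rw [sum_colv (A * realM s) (fun k => (s⁻¹.1 k i : ℝ))]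
        have : colv A i = colv (A * realM s * realM s⁻¹) i := by
          rw [Matrix.mul_assoc, realM_mul_inv, Matrix.mul_one]
        rw [this]
        ext k
        simp only [colv, Matrix.mul_apply (M := A * realM s), realM_apply, Matrix.mulVec,
          dotProduct])
    have hc := Int.le_ceil L
    refine ⟨fun i j => ?_, fun i j => ?_⟩
    · have h1 := (abs_le.1 (key i j)).1
      have : (-(⌈L⌉ : ℤ) : ℝ) ≤ s.1 i j := by linarith
      exact_mod_cast this
    · have h1 := (abs_le.1 (key i j)).2
      have : (s.1 i j : ℝ) ≤ (⌈L⌉ : ℤ) := by linarith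
      exact_mod_cast this
  · intro s _ t _ hst
    exact Units.ext (Matrix.ext fun i j => congrFun (congrFun hst i) j)

theorem qf_continuous {n : ℕ} (x : Fin n → ℝ) :
    Continuous (fun Q : Matrix (Fin n) (Fin n) ℝ => qf Q x) := by
  unfold qf
  simp only [dotProduct, Matrix.mulVec]
  fun_prop

theorem qf_add {n : ℕ} (P Q : Matrix (Fin n) (Fin n) ℝ) (x : Fin n → ℝ) :
    qf (P + Q) x = qf P x + qf Q x := by
  simp [qf, Matrix.add_mulVec, dotProduct_add]

theorem qf_smul {n : ℕ} (a : ℝ) (Q : Matrix (Fin n) (Fin n) ℝ) (x : Fin n → ℝ) :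
    qf (a • Q) x = a * qf Q x := by
  simp [qf, Matrix.smul_mulVec, dotProduct_smul]

theorem qf_abs_le {n : ℕ} (P : Matrix (Fin n) (Fin n) ℝ) (x : Fin n → ℝ) :
    |qf P x| ≤ (∑ i, ∑ j, |P i j|) * ‖x‖ ^ 2 := by
  unfold qf
  simp only [dotProduct, Matrix.mulVec, Finset.mul_sum, Finset.sum_mul]
  refine (Finset.abs_sum_le_sum_abs _ _).trans (Finset.sum_le_sum fun i _ => ?_)
  refine (Finset.abs_sum_le_sum_abs _ _).trans (Finset.sum_le_sum fun j _ => ?_)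
  rw [abs_mul, abs_mul]
  have h1 : |x i| ≤ ‖x‖ := norm_le_pi_norm x i
  have h2 : |x j| ≤ ‖x‖ := norm_le_pi_norm x j
  calc |x i| * (|P i j| * |x j|) = |P i j| * (|x i| * |x j|) := by ring
    _ ≤ |P i j| * (‖x‖ * ‖x‖) := by gcongr
    _ = _ := by ring

theorem goodSet_nhds {n : ℕ} {D : ℝ} (hD : 0 < D) {Q0 : Matrix (Fin n) (Fin n) ℝ}
    (h : Q0.PosDef) (hg : Q0 ∈ goodSet D) : ∀ᶠ Q in nhds Q0, Q ∈ goodSet D := by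
  obtain ⟨c, hc, hl⟩ := qf_lower h
  have hent : ∀ i j, Continuous (fun Q : Matrix (Fin n) (Fin n) ℝ => Q i j) := fun i j => by
    fun_prop
  have hsum : Continuous (fun Q : Matrix (Fin n) (Fin n) ℝ => ∑ i, ∑ j, |(Q - Q0) i j|) := by
    simp only [Matrix.sub_apply]
    fun_prop
  have e1 : ∀ᶠ Q in nhds Q0, ∑ i, ∑ j, |(Q - Q0) i j| < c / 2 :=
    hsum.continuousAt.eventually_lt continuousAt_const (by simp; positivity)
  have e2 : ∀ᶠ Q in nhds Q0, ∀ i, Q i i < Q0 i i + 1 :=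
    Filter.eventually_all.2 fun i =>
      (hent i i).continuousAt.eventually_lt continuousAt_const (by simp)
  have e3 : ∀ᶠ Q in nhds Q0, ∀ i j, j < i → |Q i j| < D ^ 2 * Q j j :=
    Filter.eventually_all.2 fun i => Filter.eventually_all.2 fun j =>
      Filter.eventually_imp_distrib_left.2 fun hij =>
        (hent i j).abs.continuousAt.eventually_lt
          (continuous_const.mul (hent j j)).continuousAt (hg.2 i j hij)
  have e4 : ∀ i, ∀ᶠ Q in nhds Q0, ∀ x ∈ {x : Fin n → ℤ | ‖(fun j => (x j : ℝ))‖ ≤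
      (|Q0 i i| + 1) / (D ^ 2 * (c / 2)) + 1}, (∃ j, i ≤ j ∧ x j ≠ 0) →
      Q i i < D ^ 2 * qf Q (fun j => (x j : ℝ)) := fun i => by
    refine (Filter.eventually_all_finite (int_finite _)).2 fun x _ => ?_
    refine Filter.eventually_imp_distrib_left.2 fun hx => ?_
    exact (hent i i).continuousAt.eventually_lt
      (continuous_const.mul (qf_continuous _)).continuousAt (hg.1 i x hx)
  filter_upwards [e1, e2, e3, Filter.eventually_all.2 e4] with Q h1 h2 h3 h4
  refine ⟨fun i x hx => ?_, h3⟩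
  by_cases hs : ‖(fun j => (x j : ℝ))‖ ≤ (|Q0 i i| + 1) / (D ^ 2 * (c / 2)) + 1
  · exact h4 i x hs hx
  push Not at hs
  set N := ‖(fun j => (x j : ℝ))‖ with hN
  have a1 := hl (fun j => (x j : ℝ))
  have a2 := qf_abs_le (Q - Q0) (fun j => (x j : ℝ))
  rw [← hN] at a1 a2
  have a3 : qf Q (fun j => (x j : ℝ)) =
      qf (Q - Q0) (fun j => (x j : ℝ)) + qf Q0 (fun j => (x j : ℝ)) := by
    rw [← qf_add, sub_add_cancel]
  have a4 : (∑ i, ∑ j, |(Q - Q0) i j|) * N ^ 2 ≤ c / 2 * N ^ 2 := by gcongr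
  have a5 : c / 2 * N ^ 2 ≤ qf Q (fun j => (x j : ℝ)) := by
    have := (abs_le.1 a2).1
    linarith
  have hK : 0 < D ^ 2 * (c / 2) := by positivity
  have h0 : 0 ≤ (|Q0 i i| + 1) / (D ^ 2 * (c / 2)) := by positivity
  have a6 : (|Q0 i i| + 1) / (D ^ 2 * (c / 2)) < N ^ 2 := by nlinarith
  rw [div_lt_iff₀ hK] at a6
  have a7 : D ^ 2 * (c / 2 * N ^ 2) ≤ D ^ 2 * qf Q (fun j => (x j : ℝ)) := by gcongr
  have := h2 i
  have := le_abs_self (Q0 i i)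
  linarith

theorem goodSet_convex {n : ℕ} {D : ℝ} :
    Convex ℝ (goodSet D : Set (Matrix (Fin n) (Fin n) ℝ)) := by
  rw [convex_iff_forall_pos]
  intro P hP Q hQ a b ha hb _
  refine ⟨fun i x hx => ?_, fun i j hij => ?_⟩
  · rw [qf_add, qf_smul, qf_smul]
    simp only [Matrix.add_apply, Matrix.smul_apply, smul_eq_mul]
    have := mul_lt_mul_of_pos_left (hP.1 i x hx) ha
    have := mul_lt_mul_of_pos_left (hQ.1 i x hx) hb
    linarith
  · simp only [Matrix.add_apply, Matrix.smul_apply, smul_eq_mul]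
    have h1 := mul_lt_mul_of_pos_left (hP.2 i j hij) ha
    have h2 := mul_lt_mul_of_pos_left (hQ.2 i j hij) hb
    have h3 := abs_add_le (a * P i j) (b * Q i j)
    rw [abs_mul, abs_mul, abs_of_pos ha, abs_of_pos hb] at h3
    linarith

theorem posDef_convex {n : ℕ} :
    Convex ℝ {Q : Matrix (Fin n) (Fin n) ℝ | Q.PosDef} := by
  rw [convex_iff_forall_pos]
  intro P hP Q hQ a b ha hb _
  exact (hP.smul ha).add (hQ.smul hb)

theorem act_continuous {n : ℕ} (g : GL (Fin n) ℤ) :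
    Continuous (fun Q : Matrix (Fin n) (Fin n) ℝ => act Q g) := by
  unfold act
  fun_prop

theorem act_lin {n : ℕ} (g : GL (Fin n) ℤ) (a b : ℝ) (P Q : Matrix (Fin n) (Fin n) ℝ) :
    act (a • P + b • Q) g = a • act P g + b • act Q g := by
  simp [act, Matrix.mul_add, Matrix.add_mul]

theorem GL_fp (n : ℕ) : Group.IsFinitelyPresented (GL (Fin n) ℤ) := by
  set D : ℝ := ((n : ℝ) + 1) ^ n + 1 with hD
  have hD0 : (0 : ℝ) < D := by positivity
  have hD1 : (1 : ℝ) ≤ D := by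
    have : (0 : ℝ) ≤ ((n : ℝ) + 1) ^ n := by positivity
    linarith
  let S : Set (Matrix (Fin n) (Fin n) ℝ) := {Q | Q.PosDef}
  have : LocallyConvexSpace ℝ (Matrix (Fin n) (Fin n) ℝ) :=
    inferInstanceAs (LocallyConvexSpace ℝ (Fin n → Fin n → ℝ))
  have hS : Convex ℝ S := posDef_convex
  have : ContractibleSpace S := hS.contractibleSpace ⟨1, PosDef.one⟩
  have : LocallyPathConnectedSpace S := hS.locallyPathConnectedSpace
  refine macbeath (X := S) (fun g => {Q : S | act Q.1 g ∈ goodSet D}) ?_ ?_ ?_ (Tset n D)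
    (Tset_finite n D hD1) ?_
  · intro g
    rw [isOpen_iff_mem_nhds]
    intro Q hQ
    have h1 := goodSet_nhds hD0 (act_posDef Q.2 g) hQ
    exact ((act_continuous g).comp continuous_subtype_val).continuousAt.eventually h1
  · intro Q
    exact exists_act_good Q.2
  · intro g
    rw [← Topology.IsInducing.subtypeVal.isPreconnected_image]
    apply Convex.isPreconnected
    rw [convex_iff_forall_pos]
    rintro _ ⟨P, hP, rfl⟩ _ ⟨Q, hQ, rfl⟩ a b ha hb hab
    refine ⟨⟨a • P.1 + b • Q.1, hS P.2 Q.2 ha.le hb.le hab⟩, ?_, rfl⟩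
    simp only [Set.mem_setOf_eq, act_lin]
    exact goodSet_convex hP hQ ha.le hb.le hab
  · intro i j
    constructor
    · rintro ⟨Q, hi, hj⟩
      refine ⟨act Q.1 i, act_posDef Q.2 i, hi, ?_⟩
      rw [← act_mul, mul_inv_cancel_left]
      exact hj
    · rintro ⟨Q, hQ, h1, h2⟩
      refine ⟨⟨act Q i⁻¹, act_posDef hQ _⟩, ?_, ?_⟩
      · simp only [Set.mem_setOf_eq]
        rwa [← act_mul, inv_mul_cancel, act_one]
      · simp only [Set.mem_setOf_eq]
        rwa [← act_mul]

theorem exists_invariant {n : ℕ} (H : Subgroup (GL (Fin n) ℤ)) [Finite H] :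
    ∃ Q : Matrix (Fin n) (Fin n) ℝ, Q.PosDef ∧ ∀ k ∈ H, act Q k = Q := by
  have := Fintype.ofFinite H
  refine ⟨∑ h : H, act 1 h.1, ?_, fun k hk => ?_⟩
  · exact Matrix.posDef_sum Finset.univ_nonempty fun h _ => act_posDef PosDef.one _
  · have h1 : act (∑ h : H, act 1 h.1) k = ∑ h : H, act 1 (h.1 * k) := by
      simp only [act_mul]
      simp [act, Matrix.mul_sum, Matrix.sum_mul]
    rw [h1]
    exact Fintype.sum_equiv (Equiv.mulRight (⟨k, hk⟩ : H)) _ _ fun h => rfl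

theorem exists_conj_subset {n : ℕ} (H : Subgroup (GL (Fin n) ℤ)) [Finite H] :
    ∃ g : GL (Fin n) ℤ, ((Subgroup.map (MulAut.conj g).toMonoidHom H : Subgroup _) :
      Set (GL (Fin n) ℤ)) ⊆ Tset n (((n : ℝ) + 1) ^ n + 1) := by
  obtain ⟨Q, hQ, hinv⟩ := exists_invariant H
  obtain ⟨g, hg⟩ := exists_act_good hQ
  refine ⟨g⁻¹, ?_⟩
  rintro _ ⟨k, hk, rfl⟩
  refine ⟨act Q g, act_posDef hQ g, hg, ?_⟩
  rw [← act_mul]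
  have : g * (MulAut.conj g⁻¹).toMonoidHom k = k * g := by
    simp [mul_assoc]
  rw [this, act_mul, hinv k hk]
  exact hg

/-- The group `GL_n(ℤ)` of invertible `n × n` integer matrices is
finitely presented and contains only finitely many finite subgroups up to conjugacy. -/
theorem GLnZ_finitely_presented_and_finitely_many_finite_subgroups (n : ℕ) :
    (∃ (m : ℕ) (rels : Set (FreeGroup (Fin m))), rels.Finite ∧
        Nonempty (PresentedGroup rels ≃* GL (Fin n) ℤ)) ∧
    Finite (Quot (fun (H K : {H : Subgroup (GL (Fin n) ℤ) // Finite H}) =>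
      ∃ g : GL (Fin n) ℤ, Subgroup.map (MulAut.conj g).toMonoidHom H.1 = K.1)) := by
  constructor
  · have := GL_fp n
    obtain ⟨m, s, hs, ⟨e⟩⟩ :=
      Group.IsFinitelyPresented.exists_mulEquiv_presentedGroup (G := GL (Fin n) ℤ)
    exact ⟨m, s, hs, ⟨e.symm⟩⟩
  · have hT : (Tset n (((n : ℝ) + 1) ^ n + 1)).Finite := Tset_finite n _ (by
      have : (0 : ℝ) ≤ ((n : ℝ) + 1) ^ n := by positivity
      linarith)
    have hfin : Finite {K : Subgroup (GL (Fin n) ℤ) //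
        (K : Set (GL (Fin n) ℤ)) ⊆ Tset n (((n : ℝ) + 1) ^ n + 1)} := by
      have : Finite {A : Set (GL (Fin n) ℤ) | A ⊆ Tset n (((n : ℝ) + 1) ^ n + 1)} :=
        hT.finite_subsets
      exact Finite.of_injective
        (fun K => (⟨(K.1 : Set (GL (Fin n) ℤ)), K.2⟩ :
          {A : Set (GL (Fin n) ℤ) | A ⊆ Tset n (((n : ℝ) + 1) ^ n + 1)}))
        (fun K L h => Subtype.ext (SetLike.coe_injective (congrArg Subtype.val h)))
    refine Finite.of_surjective (fun K : {K : Subgroup (GL (Fin n) ℤ) //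
        (K : Set (GL (Fin n) ℤ)) ⊆ Tset n (((n : ℝ) + 1) ^ n + 1)} =>
        Quot.mk _ ⟨K.1, (hT.subset K.2).to_subtype⟩) ?_
    intro q
    induction q using Quot.ind with
    | mk H =>
      have := H.2
      obtain ⟨g, hg⟩ := exists_conj_subset H.1
      exact ⟨⟨_, hg⟩, (Quot.sound ⟨g, rfl⟩).symm⟩
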